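/- Let α : ℝ → ℝ² be a smooth simple closed curve of length L parametrized by arc length, oriented counterclockwise, enclosing a domain Ω, with curvature κ. Let gᵢ(s) = ⟨α'(s), eᵢ⟩ for i = 1,2, and let a > 0, l > 0. If for i = 1,2 the inequality (π²/l²)∫₀ᴸ gᵢ² ds + ∫₀ᴸ (gᵢ')² ds ≥ ∫₀ᴸ (κ(s)² + 2a·(α₁α₂' − α₂α₁')(s))·gᵢ(s)² ds holds, then l ≤ (π/2)·√(L/(a·area(Ω))). -/

import Mathlib

open MeasureTheory Real

/-!
Since `g₁² + g₂² = 1` and `g₁'² + g₂'² = κ²`, adding the two stability inequalities cancels `∫ κ²`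
and leaves `2a ∫ (α₁α₂' - α₂α₁') ≤ π² L / l²`. By Green's theorem the integral on the left is twice
the area of `Ω`, and solving for `l` gives the estimate.

Green's theorem is proved by localization: a partition of unity reduces it to functions supported
away from the curve, for which both sides vanish, and to functions supported in a small chart
`(s, t) ↦ α(s) + t v` with `v` transverse to the curve. In such a chart `Ω` is the half `t > 0`, and
the formula is the fundamental theorem of calculus in `s` and in `t`. That `Ω` lies on one side of
the curve only needs an argument: that the exterior of `Ω` touches the curve at a given point is an
open and closed condition on the point, and it holds somewhere because `Ω` is bounded.
-/

open Set Filter Topology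
open scoped Manifold ContDiff

section Periodic

variable {X : Type*} {f : ℝ → X} {L a b : ℝ}

lemma injOn_Ico_of_periodic (hL : 0 < L) (hf : Function.Periodic f L)
    (hinj : InjOn f (Ico a (a + L))) (b : ℝ) : InjOn f (Ico b (b + L)) := by
  intro s hs t ht hst
  have map_toIcoMod (r : ℝ) : f (toIcoMod hL a r) = f r := hf.sub_zsmul_eq (toIcoDiv hL a r)
  have hmod : toIcoMod hL a s = toIcoMod hL a t :=
    hinj (toIcoMod_mem_Ico hL a s) (toIcoMod_mem_Ico hL a t) (by simpa only [map_toIcoMod])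
  rwa [toIcoMod_inj, ← toIcoMod_inj hL (c := b), (toIcoMod_eq_self hL).2 hs,
    (toIcoMod_eq_self hL).2 ht] at hmod

lemma image_Ico_of_periodic (hL : 0 < L) (hf : Function.Periodic f L) (a : ℝ) :
    f '' Ico a (a + L) = range f :=
  (image_subset_range _ _).antisymm <| range_subset_iff.2 fun s =>
    let ⟨t, ht, hst⟩ := hf.exists_mem_Ico hL s a
    ⟨t, ht, hst.symm⟩

lemma image_mem_nhdsWithin_range_of_periodic [TopologicalSpace X] [T2Space X] (hL : 0 < L)
    (hf : Function.Periodic f L) (hfc : Continuous f) (hinj : InjOn f (Ico a (a + L)))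
    {s₀ : ℝ} {U : Set ℝ} (hU : U ∈ 𝓝 s₀) : f '' U ∈ 𝓝[range f] (f s₀) := by
  obtain ⟨η, hη, hηU⟩ := Metric.nhds_basis_closedBall.mem_iff.1 hU
  rw [Real.closedBall_eq_Icc] at hηU
  have hclosed : IsClosed (f '' Icc (s₀ + η) (s₀ + L - η)) := (isCompact_Icc.image hfc).isClosed
  have hmem : f s₀ ∉ f '' Icc (s₀ + η) (s₀ + L - η) := by
    rintro ⟨s, hs, hfs⟩
    have := injOn_Ico_of_periodic hL hf hinj s₀ ⟨by linarith [hs.1], by linarith [hs.2]⟩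
      ⟨le_rfl, by linarith⟩ hfs
    linarith [hs.1]
  filter_upwards [self_mem_nhdsWithin, nhdsWithin_le_nhds (hclosed.isOpen_compl.mem_nhds hmem)]
    with p hp hpK
  rw [← image_Ico_of_periodic hL hf (s₀ - η)] at hp
  obtain ⟨s, hs, rfl⟩ := hp
  refine ⟨s, hηU ⟨hs.1, ?_⟩, rfl⟩
  by_contra! hlt
  exact hpK ⟨s, ⟨hlt.le, by linarith [hs.2]⟩, rfl⟩

lemma intervalIntegral_eq_of_periodic_of_eq_zero {E : Type*} [NormedAddCommGroup E]
    [NormedSpace ℝ E] {f : ℝ → E} (hf : Function.Periodic f L) (hab : a ≤ b) (hbL : b ≤ a + L)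
    (hzero : ∀ s ∈ Ico b (a + L), f s = 0) :
    ∫ s in 0..L, f s = ∫ s in a..b, f s := by
  rw [← zero_add L, hf.intervalIntegral_add_eq 0 a,
    intervalIntegral.integral_of_le (hab.trans hbL), intervalIntegral.integral_of_le hab,
    integral_Ioc_eq_integral_Ioo, integral_Ioc_eq_integral_Ioo]
  exact setIntegral_eq_of_subset_of_forall_sdiff_eq_zero measurableSet_Ioo
    (Ioo_subset_Ioo_right hbL) fun s hs => hzero s ⟨not_lt.1 fun h => hs.2 ⟨hs.1.1, h⟩, hs.1.2⟩

end Periodic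

section Rectangle

variable {E : Type*} [NormedAddCommGroup E] {F F' : ℝ × ℝ → E} {a b c d : ℝ}

lemma integrableOn_Ioo_prod_Ioo (hF : Continuous F) :
    IntegrableOn F (Ioo a b ×ˢ Ioo c d) :=
  (hF.continuousOn.integrableOn_compact (isCompact_Icc.prod isCompact_Icc)).mono_set
    (prod_mono Ioo_subset_Icc_self Ioo_subset_Icc_self)

variable [NormedSpace ℝ E] [CompleteSpace E]

lemma setIntegral_rectangle_of_hasDerivAt_snd (hcd : c ≤ d)
    (hF : ∀ q, HasDerivAt (fun t => F (q.1, t)) (F' q) q.2) (hF' : Continuous F') :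
    ∫ q in Ioo a b ×ˢ Ioo c d, F' q = ∫ s in Ioo a b, (F (s, d) - F (s, c)) := by
  have hint : IntegrableOn F' (Ioo a b ×ˢ Ioo c d) := integrableOn_Ioo_prod_Ioo hF'
  rw [Measure.volume_eq_prod] at hint ⊢
  rw [setIntegral_prod _ hint]
  congr with s
  rw [← integral_Ioc_eq_integral_Ioo, ← intervalIntegral.integral_of_le hcd]
  exact intervalIntegral.integral_eq_sub_of_hasDerivAt (f := fun t => F (s, t))
    (f' := fun t => F' (s, t)) (fun t _ => hF (s, t))
    (Continuous.intervalIntegrable (by fun_prop) c d)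

lemma setIntegral_rectangle_of_hasDerivAt_fst (hab : a ≤ b)
    (hF : ∀ q, HasDerivAt (fun s => F (s, q.2)) (F' q) q.1) (hF' : Continuous F') :
    ∫ q in Ioo a b ×ˢ Ioo c d, F' q = ∫ t in Ioo c d, (F (b, t) - F (a, t)) := by
  rw [Measure.volume_eq_prod, ← setIntegral_prod_swap, ← Measure.volume_eq_prod]
  exact setIntegral_rectangle_of_hasDerivAt_snd (F := F ∘ Prod.swap) hab
    (fun q => hF q.swap) (hF'.comp continuous_swap)

end Rectangle

section TestFunctions

variable {E F : Type*} [NormedAddCommGroup E] [NormedSpace ℝ E] [FiniteDimensional ℝ E]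
  [NormedAddCommGroup F] [NormedSpace ℝ F]

theorem hasCompactSupport_contDiff_induction {n : ℕ∞} {P : (E → F) → Prop} (zero : P 0)
    (add : ∀ f g, ContDiff ℝ n f → HasCompactSupport f → ContDiff ℝ n g → HasCompactSupport g →
      P f → P g → P (f + g))
    (locally : ∀ x, ∃ V ∈ 𝓝 x, ∀ f, ContDiff ℝ n f → HasCompactSupport f → tsupport f ⊆ V → P f)
    {f : E → F} (hf : ContDiff ℝ n f) (hfc : HasCompactSupport f) : P f := by
  choose V hV hP using locally
  obtain ⟨t, -, ht⟩ := hfc.elim_nhds_subcover (fun x => interior (V x))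
    fun x _ => interior_mem_nhds.2 (hV x)
  obtain ⟨ρ, hρ⟩ := SmoothPartitionOfUnity.exists_isSubordinate 𝓘(ℝ, E) (isClosed_tsupport f)
    (fun x : t => interior (V x)) (fun _ => isOpen_interior) (by simpa [iUnion_subtype] using ht)
  have hsum : f = ∑ i, fun x => ρ i x • f x := by
    ext x
    rw [Finset.sum_apply, ← Finset.sum_smul]
    by_cases hx : x ∈ tsupport f
    · rw [← finsum_eq_sum_of_fintype, ρ.sum_eq_one hx, one_smul]
    · rw [image_eq_zero_of_notMem_tsupport hx, smul_zero]
  have hpiece (i : t) : ContDiff ℝ n (fun x => ρ i x • f x) ∧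
      HasCompactSupport (fun x => ρ i x • f x) ∧ P (fun x => ρ i x • f x) := by
    have hsmooth : ContDiff ℝ n (fun x => ρ i x • f x) :=
      ((ρ i).contMDiff.contDiff.of_le (mod_cast le_top)).smul hf
    have hsupp : HasCompactSupport (fun x => ρ i x • f x) := hfc.smul_left
    exact ⟨hsmooth, hsupp, hP i _ hsmooth hsupp
      ((tsupport_smul_subset_left _ _).trans ((hρ i).trans interior_subset))⟩
  rw [hsum]
  refine (Finset.sum_induction _ (fun g => ContDiff ℝ n g ∧ HasCompactSupport g ∧ P g) ?_
    ⟨contDiff_const, .zero, zero⟩ fun i _ => hpiece i).2.2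
  exact fun g h ⟨hg, hgc, hPg⟩ ⟨hh, hhc, hPh⟩ =>
    ⟨hg.add hh, hgc.add hhc, add g h hg hgc hh hhc hPg hPh⟩

theorem integral_fderiv_eq_zero_of_hasCompactSupport [MeasurableSpace E] [BorelSpace E]
    {μ : Measure E} [μ.IsAddHaarMeasure] {G : E → F} (hG : ContDiff ℝ 1 G)
    (hGc : HasCompactSupport G) (w : E) : ∫ x, fderiv ℝ G x w ∂μ = 0 := by
  have hint : Integrable (fun x => fderiv ℝ G x w) μ :=
    ((hG.continuous_fderiv one_ne_zero).clm_apply continuous_const).integrable_of_hasCompactSupport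
      (hGc.fderiv_apply ℝ w)
  simpa using integral_smul_fderiv_eq_neg_fderiv_smul_of_integrable (f := fun _ : E => (1 : ℝ))
    (g := G) (v := w) (by simp) (by simpa using hint)
    (by simpa using hG.continuous.integrable_of_hasCompactSupport hGc)
    (fun x _ => differentiableAt_const _) (fun x _ => hG.differentiable one_ne_zero x)

end TestFunctions

section Plane

/-- The standard area form `det (u, v)` of the plane. -/
def areaForm (u v : ℝ × ℝ) : ℝ := u.1 * v.2 - u.2 * v.1

/-- Rotation by `π / 2`, written `J` in the paper: it turns the unit tangent of a curve into its
left normal. -/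
def quarterTurn (u : ℝ × ℝ) : ℝ × ℝ := (-u.2, u.1)

@[fun_prop]
lemma continuous_areaForm {X : Type*} [TopologicalSpace X] {f g : X → ℝ × ℝ}
    (hf : Continuous f) (hg : Continuous g) : Continuous fun x => areaForm (f x) (g x) := by
  unfold areaForm
  fun_prop

lemma areaForm_quarterTurn_self (u : ℝ × ℝ) : areaForm u (quarterTurn u) = u.1 ^ 2 + u.2 ^ 2 := by
  simp only [areaForm, quarterTurn]
  ring

lemma areaForm_quarterTurn_self_pos {u : ℝ × ℝ} (hu : u ≠ 0) : 0 < areaForm u (quarterTurn u) := by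
  rw [areaForm_quarterTurn_self]
  rcases eq_or_ne u.1 0 with h | h
  · have : u.2 ≠ 0 := fun h' => hu (Prod.ext h h')
    positivity
  · positivity

lemma areaForm_smul_eq (u v w : ℝ × ℝ) :
    areaForm u v • w = areaForm w v • u + areaForm u w • v := by
  ext <;> simp only [areaForm, Prod.smul_fst, Prod.smul_snd, Prod.fst_add, Prod.snd_add,
    smul_eq_mul] <;> ring

/-- The linear endomorphism of the plane whose matrix has columns `u` and `v`. -/
noncomputable def columnMap (u v : ℝ × ℝ) : ℝ × ℝ →L[ℝ] ℝ × ℝ :=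
  (ContinuousLinearMap.toSpanSingleton ℝ u).coprod (ContinuousLinearMap.toSpanSingleton ℝ v)

lemma det_columnMap (u v : ℝ × ℝ) : (columnMap u v).det = areaForm u v := by
  rw [ContinuousLinearMap.det, ← LinearMap.det_toMatrix (Module.Basis.finTwoProd ℝ),
    Matrix.det_fin_two]
  simp [LinearMap.toMatrix_apply, columnMap, areaForm, mul_comm]

end Plane

section Tube

variable {α : ℝ → ℝ × ℝ} {v : ℝ × ℝ} {L s₀ δ : ℝ}

/-- The map `(s, t) ↦ α s + t • v`, which straightens the curve `α` near the parameters at which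
`v` is transverse to it. -/
def tube (α : ℝ → ℝ × ℝ) (v q : ℝ × ℝ) : ℝ × ℝ := α q.1 + q.2 • v

@[simp]
lemma tube_zero (α : ℝ → ℝ × ℝ) (v : ℝ × ℝ) (s : ℝ) : tube α v (s, 0) = α s := by
  simp [tube]

lemma contDiff_tube {n : ℕ∞ω} (hα : ContDiff ℝ n α) (v : ℝ × ℝ) : ContDiff ℝ n (tube α v) := by
  unfold tube
  fun_prop

lemma hasFDerivAt_tube (hα : Differentiable ℝ α) (v q : ℝ × ℝ) :
    HasFDerivAt (tube α v) (columnMap (deriv α q.1) v) q :=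
  (((hα q.1).hasDerivAt.hasFDerivAt.comp q hasFDerivAt_fst).add
    ((hasFDerivAt_snd (p := q)).smul_const v)).congr_fderiv (by ext <;> simp [columnMap])

/-- A regular `C¹` parametrization of a simple closed curve, extended with period `L`. -/
structure IsSimpleClosedCurve (α : ℝ → ℝ × ℝ) (L : ℝ) : Prop where
  period_pos : 0 < L
  contDiff : ContDiff ℝ 1 α
  deriv_ne_zero : ∀ s, deriv α s ≠ 0
  periodic : Function.Periodic α L
  injOn : InjOn α (Ico 0 L)

/-- The square of half-side `δ` about `(s₀, 0)` is so small that `tube α v` is an orientation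
preserving chart on it, in which the curve `α` appears only as the axis `t = 0`, traversed once. -/
structure IsTubeChart (α : ℝ → ℝ × ℝ) (v : ℝ × ℝ) (L s₀ δ : ℝ) : Prop where
  pos : 0 < δ
  two_mul_le : 2 * δ ≤ L
  injOn : InjOn (tube α v) (Icc (s₀ - δ) (s₀ + δ) ×ˢ Icc (-δ) δ)
  isOpen_image : IsOpen (tube α v '' Ioo (s₀ - δ) (s₀ + δ) ×ˢ Ioo (-δ) δ)
  snd_eq_zero : ∀ q ∈ Icc (s₀ - δ) (s₀ + δ) ×ˢ Icc (-δ) δ, tube α v q ∈ range α → q.2 = 0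
  areaForm_pos : ∀ s ∈ Icc (s₀ - δ) (s₀ + δ), 0 < areaForm (deriv α s) v

lemma exists_openPartialHomeomorph_tube (hα : ContDiff ℝ 1 α) (hv : areaForm (deriv α s₀) v ≠ 0) :
    ∃ e : OpenPartialHomeomorph (ℝ × ℝ) (ℝ × ℝ), ⇑e = tube α v ∧ (s₀, 0) ∈ e.source := by
  rw [← det_columnMap] at hv
  have hstrict : HasStrictFDerivAt (tube α v)
      ((columnMap (deriv α s₀) v).toContinuousLinearEquivOfDetNeZero hv : ℝ × ℝ →L[ℝ] ℝ × ℝ)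
      (s₀, 0) :=
    (contDiff_tube hα v).contDiffAt.hasStrictFDerivAt'
      (hasFDerivAt_tube (hα.differentiable one_ne_zero) v (s₀, 0)) one_ne_zero
  exact ⟨hstrict.toOpenPartialHomeomorph, rfl, hstrict.mem_toOpenPartialHomeomorph_source⟩

lemma IsSimpleClosedCurve.eventually_tube_mem_range (hα : IsSimpleClosedCurve α L)
    (hv : areaForm (deriv α s₀) v ≠ 0) :
    ∀ᶠ q in 𝓝 (s₀, (0 : ℝ)), tube α v q ∈ range α → q.2 = 0 := by
  obtain ⟨e, he, hs₀⟩ := exists_openPartialHomeomorph_tube hα.contDiff hv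
  have hsource : ∀ᶠ q in 𝓝 (s₀, (0 : ℝ)), q ∈ e.source := e.open_source.mem_nhds hs₀
  have haxis : ∀ᶠ s in 𝓝 s₀, (s, (0 : ℝ)) ∈ e.source :=
    (Continuous.prodMk_left (0 : ℝ)).tendsto s₀ |>.eventually hsource
  have hcont : Tendsto (tube α v) (𝓝 (s₀, 0)) (𝓝 (α s₀)) := by
    simpa using (contDiff_tube hα.contDiff v).continuous.tendsto (s₀, 0)
  filter_upwards [hsource, hcont.eventually <| eventually_nhdsWithin_iff.1 <|
    image_mem_nhdsWithin_range_of_periodic hα.period_pos hα.periodic hα.contDiff.continuous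
      (a := 0) (by simpa using hα.injOn) haxis] with q hq hqrange hqα
  obtain ⟨s, hs, hsq⟩ := hqrange hqα
  have : q = (s, 0) := e.injOn hq hs (by rw [he, tube_zero, hsq])
  rw [this]

theorem IsSimpleClosedCurve.exists_isTubeChart (hα : IsSimpleClosedCurve α L)
    (hv : 0 < areaForm (deriv α s₀) v) : ∃ δ, IsTubeChart α v L s₀ δ := by
  obtain ⟨e, he, hs₀⟩ := exists_openPartialHomeomorph_tube hα.contDiff hv.ne'
  have hsource : ∀ᶠ q in 𝓝 (s₀, (0 : ℝ)), q ∈ e.source := e.open_source.mem_nhds hs₀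
  have hpos : ∀ᶠ q in 𝓝 (s₀, (0 : ℝ)), 0 < areaForm (deriv α q.1) v := by
    have := hα.contDiff.continuous_deriv_one
    exact continuousAt_const.eventually_lt (g := fun q : ℝ × ℝ => areaForm (deriv α q.1) v)
      (Continuous.continuousAt (by fun_prop)) hv
  obtain ⟨r, hr, hball⟩ := Metric.nhds_basis_closedBall.eventually_iff.1
    (hsource.and ((hα.eventually_tube_mem_range hv.ne').and hpos))
  have hL := hα.period_pos
  set δ := min r (L / 2)
  have hδ : 0 < δ := by positivity
  have hbox : ∀ q ∈ Icc (s₀ - δ) (s₀ + δ) ×ˢ Icc (-δ) δ,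
      q ∈ e.source ∧ (tube α v q ∈ range α → q.2 = 0) ∧ 0 < areaForm (deriv α q.1) v := by
    intro q hq
    refine hball (Metric.closedBall_subset_closedBall (min_le_left r (L / 2)) ?_)
    rwa [← closedBall_prod_same, Real.closedBall_eq_Icc, Real.closedBall_eq_Icc, zero_sub, zero_add]
  exact ⟨δ, {
    pos := hδ
    two_mul_le := by linarith [min_le_right r (L / 2)]
    injOn := he ▸ e.injOn.mono fun q hq => (hbox q hq).1
    isOpen_image := he ▸ e.isOpen_image_of_subset_source (isOpen_Ioo.prod isOpen_Ioo) fun q hq =>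
      (hbox q (prod_mono Ioo_subset_Icc_self Ioo_subset_Icc_self hq)).1
    snd_eq_zero := fun q hq => (hbox q hq).2.1
    areaForm_pos := fun s hs => (hbox (s, 0) ⟨hs, by simp [hδ.le]⟩).2.2 }⟩

end Tube

section Sides

variable {α : ℝ → ℝ × ℝ} {v : ℝ × ℝ} {L s₀ δ : ℝ} {Ω : Set (ℝ × ℝ)}

lemma subset_interior_or_subset_compl_closure_of_isPreconnected {X : Type*} [TopologicalSpace X]
    {S A : Set X} (hS : IsPreconnected S) (hSA : Disjoint S (frontier A)) :
    S ⊆ interior A ∨ S ⊆ (closure A)ᶜ :=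
  hS.subset_or_subset isOpen_interior isClosed_closure.isOpen_compl
    (disjoint_compl_right.mono_left interior_subset_closure)
    fun _ hx => or_iff_not_imp_right.2 fun hxcl =>
      by_contra fun hxint => hSA.notMem_of_mem_left hx ⟨not_not.1 hxcl, hxint⟩

/-- `Ω` is a bounded open set with boundary the curve `α`, and it lies to the left of `α`, so that
`α` runs counterclockwise around it. -/
structure IsEnclosedBy (Ω : Set (ℝ × ℝ)) (α : ℝ → ℝ × ℝ) : Prop where
  isOpen : IsOpen Ω
  isBounded : Bornology.IsBounded Ω
  frontier_eq : frontier Ω = range α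
  left_mem : ∀ s, ∀ᶠ t : ℝ in 𝓝[>] 0, α s + t • quarterTurn (deriv α s) ∈ Ω

namespace IsTubeChart

lemma mem_image (h : IsTubeChart α v L s₀ δ) :
    α s₀ ∈ tube α v '' Ioo (s₀ - δ) (s₀ + δ) ×ˢ Ioo (-δ) δ :=
  have hδ := h.pos
  ⟨(s₀, 0), by simp [hδ], tube_zero α v s₀⟩

lemma image_subset_or (h : IsTubeChart α v L s₀ δ) (hα : ContDiff ℝ 1 α)
    (hfr : frontier Ω = range α) {T : Set ℝ} (hT : IsPreconnected T) (hTδ : T ⊆ Icc (-δ) δ)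
    (hT0 : 0 ∉ T) :
    tube α v '' Ioo (s₀ - δ) (s₀ + δ) ×ˢ T ⊆ interior Ω ∨
      tube α v '' Ioo (s₀ - δ) (s₀ + δ) ×ˢ T ⊆ (closure Ω)ᶜ := by
  refine subset_interior_or_subset_compl_closure_of_isPreconnected
    ((isPreconnected_Ioo.prod hT).image _ (contDiff_tube hα v).continuous.continuousOn)
    (disjoint_left.2 ?_)
  rintro _ ⟨q, ⟨hq₁, hq₂⟩, rfl⟩ hq
  exact hT0 (h.snd_eq_zero q ⟨Ioo_subset_Icc_self hq₁, hTδ hq₂⟩ (hfr ▸ hq) ▸ hq₂)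

lemma mem_closure_compl_closure (h : IsTubeChart α v L s₀ δ) (hα : ContDiff ℝ 1 α)
    (hfr : frontier Ω = range α) (hs₀ : α s₀ ∈ closure (closure Ω)ᶜ) {s : ℝ}
    (hs : s ∈ Ioo (s₀ - δ) (s₀ + δ)) : α s ∈ closure (closure Ω)ᶜ := by
  have hδ := h.pos
  obtain ⟨_, ⟨q, ⟨hq₁, hq₂⟩, rfl⟩, hqΩ⟩ := mem_closure_iff.1 hs₀ _ h.isOpen_image h.mem_image
  have of_half {T : Set ℝ} (hT : IsPreconnected T) (hTδ : T ⊆ Icc (-δ) δ) (hT0 : 0 ∉ T)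
      (hTcl : 0 ∈ closure T) (hqT : q.2 ∈ T) : α s ∈ closure (closure Ω)ᶜ := by
    have hout : tube α v '' Ioo (s₀ - δ) (s₀ + δ) ×ˢ T ⊆ (closure Ω)ᶜ :=
      (h.image_subset_or hα hfr hT hTδ hT0).resolve_left fun hin =>
        hqΩ (interior_subset_closure (hin ⟨q, ⟨hq₁, hqT⟩, rfl⟩))
    rw [← tube_zero α v s]
    refine map_mem_closure (contDiff_tube hα v).continuous ?_ (mapsTo_iff_image_subset.2 hout)
    rw [closure_prod_eq]
    exact ⟨subset_closure hs, hTcl⟩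
  have hq0 : q.2 ≠ 0 := fun hq0 => hqΩ <| frontier_subset_closure <| hfr ▸
    ⟨q.1, by rw [← tube_zero α v, ← hq0]⟩
  rcases hq0.lt_or_gt with hneg | hpos
  · exact of_half isPreconnected_Ioo (fun t ht => ⟨ht.1.le, ht.2.le.trans hδ.le⟩) (by simp)
      (by simp [closure_Ioo (neg_neg_of_pos hδ).ne, hδ.le]) ⟨hq₂.1, hneg⟩
  · exact of_half isPreconnected_Ioo (fun t ht => ⟨by linarith [ht.1], ht.2.le⟩) (by simp)
      (by simp [closure_Ioo hδ.ne, hδ.le]) ⟨hpos, hq₂.2⟩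

end IsTubeChart

/-- The parameters at which the exterior of `Ω` touches the curve form an open and closed set; were
it empty, `closure Ω` would be open and closed, although it is bounded and nonempty. -/
theorem IsSimpleClosedCurve.mem_closure_compl_closure (hα : IsSimpleClosedCurve α L)
    (hΩ : Bornology.IsBounded Ω) (hfr : frontier Ω = range α) (s : ℝ) :
    α s ∈ closure (closure Ω)ᶜ := by
  have hclosed : IsClosed (α ⁻¹' closure (closure Ω)ᶜ) :=
    isClosed_closure.preimage hα.contDiff.continuous
  have hopen : IsOpen (α ⁻¹' closure (closure Ω)ᶜ) := isOpen_iff_mem_nhds.2 fun s₀ hs₀ => by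
    obtain ⟨δ, h⟩ := hα.exists_isTubeChart (areaForm_quarterTurn_self_pos (hα.deriv_ne_zero s₀))
    exact mem_of_superset (Ioo_mem_nhds (by linarith [h.pos]) (by linarith [h.pos]))
      fun s hs => h.mem_closure_compl_closure hα.contDiff hfr hs₀ hs
  rcases isClopen_iff.1 ⟨hclosed, hopen⟩ with hempty | huniv
  · exfalso
    have hfrcl : frontier (closure Ω) = ∅ := by
      refine eq_empty_of_forall_notMem fun p hp => ?_
      obtain ⟨s, rfl⟩ := hfr ▸ frontier_closure_subset hp
      rw [frontier_eq_closure_inter_closure] at hp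
      exact hempty.subset (show s ∈ α ⁻¹' closure (closure Ω)ᶜ from hp.2)
    have hmem : α 0 ∈ closure Ω := frontier_subset_closure (hfr ▸ mem_range_self 0)
    rcases frontier_eq_empty_iff.1 hfrcl with hcl | hcl
    · exact (hcl ▸ hmem : α 0 ∈ (∅ : Set (ℝ × ℝ)))
    · exact NormedSpace.unbounded_univ ℝ (ℝ × ℝ) (hcl ▸ hΩ.closure)
  · exact huniv.superset (mem_univ s)

namespace IsTubeChart

lemma image_left_subset (h : IsTubeChart α v L s₀ δ) (hα : ContDiff ℝ 1 α)
    (hfr : frontier Ω = range α) (hleft : ∀ᶠ t : ℝ in 𝓝[>] 0, α s₀ + t • v ∈ Ω) :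
    tube α v '' Ioo (s₀ - δ) (s₀ + δ) ×ˢ Ioo 0 δ ⊆ interior Ω := by
  have hδ := h.pos
  refine (h.image_subset_or hα hfr isPreconnected_Ioo
    (fun t ht => ⟨by linarith [ht.1], ht.2.le⟩) (by simp)).resolve_right fun hout => ?_
  obtain ⟨t, htΩ, ht⟩ := (hleft.and (Ioo_mem_nhdsGT hδ)).exists
  exact hout ⟨(s₀, t), ⟨by simp [hδ], ht⟩, rfl⟩ (subset_closure htΩ)

lemma image_right_subset (h : IsTubeChart α v L s₀ δ) (hα : ContDiff ℝ 1 α)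
    (hfr : frontier Ω = range α) (hleft : ∀ᶠ t : ℝ in 𝓝[>] 0, α s₀ + t • v ∈ Ω)
    (hs₀ : α s₀ ∈ closure (closure Ω)ᶜ) :
    tube α v '' Ioo (s₀ - δ) (s₀ + δ) ×ˢ Ioo (-δ) 0 ⊆ (closure Ω)ᶜ := by
  have hδ := h.pos
  refine (h.image_subset_or hα hfr isPreconnected_Ioo
    (fun t ht => ⟨ht.1.le, by linarith [ht.2]⟩) (by simp)).resolve_left fun hin => ?_
  obtain ⟨_, ⟨q, ⟨hq₁, hq₂⟩, rfl⟩, hqΩ⟩ := mem_closure_iff.1 hs₀ _ h.isOpen_image h.mem_image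
  refine hqΩ ?_
  rcases lt_trichotomy q.2 0 with hneg | hzero | hpos
  · exact interior_subset_closure (hin ⟨q, ⟨hq₁, hq₂.1, hneg⟩, rfl⟩)
  · exact frontier_subset_closure (hfr ▸ ⟨q.1, by rw [← tube_zero α v, ← hzero]⟩)
  · exact interior_subset_closure (h.image_left_subset hα hfr hleft ⟨q, ⟨hq₁, hpos, hq₂.2⟩, rfl⟩)

theorem inter_image_eq (h : IsTubeChart α v L s₀ δ) (hα : ContDiff ℝ 1 α) (hΩ : IsOpen Ω)
    (hfr : frontier Ω = range α) (hleft : ∀ᶠ t : ℝ in 𝓝[>] 0, α s₀ + t • v ∈ Ω)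
    (hs₀ : α s₀ ∈ closure (closure Ω)ᶜ) :
    Ω ∩ tube α v '' Ioo (s₀ - δ) (s₀ + δ) ×ˢ Ioo (-δ) δ =
      tube α v '' Ioo (s₀ - δ) (s₀ + δ) ×ˢ Ioo 0 δ := by
  have hδ := h.pos
  apply Subset.antisymm
  · rintro _ ⟨hqΩ, q, ⟨hq₁, hq₂⟩, rfl⟩
    refine ⟨q, ⟨hq₁, not_le.1 fun hle => ?_, hq₂.2⟩, rfl⟩
    rcases hle.lt_or_eq with hneg | hzero
    · exact h.image_right_subset hα hfr hleft hs₀ ⟨q, ⟨hq₁, hq₂.1, hneg⟩, rfl⟩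
        (subset_closure hqΩ)
    · have : tube α v q ∈ frontier Ω := hfr ▸ ⟨q.1, by rw [← tube_zero α v, ← hzero]⟩
      exact (hΩ.frontier_eq ▸ this).2 hqΩ
  · exact subset_inter ((h.image_left_subset hα hfr hleft).trans interior_subset)
      (image_mono (prod_mono_right (Ioo_subset_Ioo_left (by linarith))))

end IsTubeChart

end Sides

section Green

variable {α : ℝ → ℝ × ℝ} {v w : ℝ × ℝ} {L s₀ δ : ℝ} {Ω : Set (ℝ × ℝ)} {G : ℝ × ℝ → ℝ}

/-- Green's formula over `Ω` for the function `G`, in directional form: applied to `w = (1, 0)` and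
`w = (0, 1)` it says `∫ ∂₁G = ∫ G dy` and `∫ ∂₂G = -∫ G dx`. -/
def GreenFormula (α : ℝ → ℝ × ℝ) (L : ℝ) (Ω : Set (ℝ × ℝ)) (G : ℝ × ℝ → ℝ) : Prop :=
  ∀ w, ∫ p in Ω, fderiv ℝ G p w = ∫ s in 0..L, areaForm w (deriv α s) * G (α s)

lemma hasDerivAt_comp_tube_fst (hα : ContDiff ℝ 1 α) (hG : ContDiff ℝ 1 G) (v q : ℝ × ℝ) :
    HasDerivAt (fun s => G (tube α v (s, q.2))) (fderiv ℝ G (tube α v q) (deriv α q.1)) q.1 :=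
  (hG.differentiable one_ne_zero _).hasFDerivAt.comp_hasDerivAt _
    ((hα.differentiable one_ne_zero q.1).hasDerivAt.add_const (q.2 • v))

lemma hasDerivAt_comp_tube_snd (hG : ContDiff ℝ 1 G) (α : ℝ → ℝ × ℝ) (v q : ℝ × ℝ) :
    HasDerivAt (fun t => G (tube α v (q.1, t))) (fderiv ℝ G (tube α v q) v) q.2 :=
  (hG.differentiable one_ne_zero _).hasFDerivAt.comp_hasDerivAt _ <| by
    simpa [tube] using ((hasDerivAt_id q.2).smul_const v).const_add (α q.1)

/-- The vector `w` is expanded in the frame `(α', v)`, which turns the integrand on the left into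
`∂ₛ (areaForm w v * G) + ∂ₜ (areaForm α' w * G)` in the coordinates `(s, t)`. -/
lemma setIntegral_rectangle_areaForm_mul_fderiv {a b c d : ℝ} (hα : ContDiff ℝ 1 α)
    (hG : ContDiff ℝ 1 G) (hab : a ≤ b) (hcd : c ≤ d) (v w : ℝ × ℝ) :
    ∫ q in Ioo a b ×ˢ Ioo c d, areaForm (deriv α q.1) v * fderiv ℝ G (tube α v q) w =
      (∫ t in Ioo c d, (areaForm w v * G (tube α v (b, t)) - areaForm w v * G (tube α v (a, t)))) +
      ∫ s in Ioo a b, (areaForm (deriv α s) w * G (tube α v (s, d)) -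
        areaForm (deriv α s) w * G (tube α v (s, c))) := by
  have hα' := hα.continuous_deriv_one
  have hG' := hG.continuous_fderiv one_ne_zero
  have htube := (contDiff_tube hα v).continuous
  have hcont₁ : Continuous fun q : ℝ × ℝ =>
      areaForm w v * fderiv ℝ G (tube α v q) (deriv α q.1) :=
    continuous_const.mul ((hG'.comp htube).clm_apply (hα'.comp continuous_fst))
  have hcont₂ : Continuous fun q : ℝ × ℝ =>
      areaForm (deriv α q.1) w * fderiv ℝ G (tube α v q) v :=
    (continuous_areaForm (hα'.comp continuous_fst) continuous_const).mul
      ((hG'.comp htube).clm_apply continuous_const)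
  rw [← setIntegral_rectangle_of_hasDerivAt_fst
      (F := fun q => areaForm w v * G (tube α v q)) hab
      (fun q => (hasDerivAt_comp_tube_fst hα hG v q).const_mul _) hcont₁,
    ← setIntegral_rectangle_of_hasDerivAt_snd
      (F := fun q => areaForm (deriv α q.1) w * G (tube α v q)) hcd
      (fun q => (hasDerivAt_comp_tube_snd hG α v q).const_mul (areaForm (deriv α q.1) w)) hcont₂,
    ← integral_add (integrableOn_Ioo_prod_Ioo hcont₁) (integrableOn_Ioo_prod_Ioo hcont₂)]
  congr with q
  simpa using congrArg (fderiv ℝ G (tube α v q)) (areaForm_smul_eq (deriv α q.1) v w)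

namespace IsTubeChart

lemma setIntegral_image (h : IsTubeChart α v L s₀ δ) (hα : Differentiable ℝ α) {S : Set (ℝ × ℝ)}
    (hS : MeasurableSet S) (hSδ : S ⊆ Icc (s₀ - δ) (s₀ + δ) ×ˢ Icc (-δ) δ) (f : ℝ × ℝ → ℝ) :
    ∫ p in tube α v '' S, f p = ∫ q in S, areaForm (deriv α q.1) v * f (tube α v q) := by
  rw [integral_image_eq_integral_abs_det_fderiv_smul volume hS
    (fun q _ => (hasFDerivAt_tube hα v q).hasFDerivWithinAt) (h.injOn.mono hSδ)]
  refine setIntegral_congr_fun hS fun q hq => ?_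
  simp only [det_columnMap, abs_of_pos (h.areaForm_pos q.1 (hSδ hq).1), smul_eq_mul]

lemma comp_tube_eq_zero (h : IsTubeChart α v L s₀ δ)
    (hGδ : tsupport G ⊆ tube α v '' Ioo (s₀ - δ) (s₀ + δ) ×ˢ Ioo (-δ) δ) {q : ℝ × ℝ}
    (hq : q ∈ Icc (s₀ - δ) (s₀ + δ) ×ˢ Icc (-δ) δ)
    (hqδ : q ∉ Ioo (s₀ - δ) (s₀ + δ) ×ˢ Ioo (-δ) δ) : G (tube α v q) = 0 := by
  refine image_eq_zero_of_notMem_tsupport fun hmem => hqδ ?_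
  obtain ⟨q', hq', hqq'⟩ := hGδ hmem
  rwa [← h.injOn (prod_mono Ioo_subset_Icc_self Ioo_subset_Icc_self hq') hq hqq']

lemma setIntegral_fderiv (h : IsTubeChart α v L s₀ δ) (hα : ContDiff ℝ 1 α) (hΩ : IsOpen Ω)
    (hfr : frontier Ω = range α) (hleft : ∀ᶠ t : ℝ in 𝓝[>] 0, α s₀ + t • v ∈ Ω)
    (hs₀ : α s₀ ∈ closure (closure Ω)ᶜ) (hG : ContDiff ℝ 1 G)
    (hGδ : tsupport G ⊆ tube α v '' Ioo (s₀ - δ) (s₀ + δ) ×ˢ Ioo (-δ) δ) (w : ℝ × ℝ) :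
    ∫ p in Ω, fderiv ℝ G p w =
      ∫ s in (s₀ - δ)..(s₀ + δ), areaForm w (deriv α s) * G (α s) := by
  have hδ := h.pos
  have hδs : s₀ - δ ≤ s₀ + δ := by linarith
  have hside {s t : ℝ} (ht : t ∈ Ioo 0 δ) (hs : s ∈ Icc (s₀ - δ) (s₀ + δ))
      (hsδ : s ∉ Ioo (s₀ - δ) (s₀ + δ)) : G (tube α v (s, t)) = 0 :=
    h.comp_tube_eq_zero hGδ ⟨hs, by linarith [ht.1], ht.2.le⟩ fun hq => hsδ hq.1
  have htop {s : ℝ} (hs : s ∈ Ioo (s₀ - δ) (s₀ + δ)) : G (tube α v (s, δ)) = 0 :=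
    h.comp_tube_eq_zero hGδ ⟨Ioo_subset_Icc_self hs, by simp [hδ.le]⟩ fun hq => hq.2.2.false
  calc ∫ p in Ω, fderiv ℝ G p w
      = ∫ p in tube α v '' Ioo (s₀ - δ) (s₀ + δ) ×ˢ Ioo 0 δ, fderiv ℝ G p w := by
        rw [← h.inter_image_eq hα hΩ hfr hleft hs₀]
        exact setIntegral_eq_of_subset_of_forall_sdiff_eq_zero hΩ.measurableSet inter_subset_left
          fun p hp => image_eq_zero_of_notMem_tsupport (f := fun p => fderiv ℝ G p w) fun hmem =>
            hp.2 ⟨hp.1, hGδ (tsupport_fderiv_apply_subset ℝ w hmem)⟩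
    _ = ∫ q in Ioo (s₀ - δ) (s₀ + δ) ×ˢ Ioo 0 δ,
          areaForm (deriv α q.1) v * fderiv ℝ G (tube α v q) w :=
        h.setIntegral_image (hα.differentiable one_ne_zero)
          (measurableSet_Ioo.prod measurableSet_Ioo)
          (prod_mono Ioo_subset_Icc_self fun t ht => ⟨by linarith [ht.1], ht.2.le⟩) _
    _ = ∫ s in Ioo (s₀ - δ) (s₀ + δ), areaForm w (deriv α s) * G (α s) := by
        rw [setIntegral_rectangle_areaForm_mul_fderiv hα hG hδs hδ.le,
          setIntegral_eq_zero_of_forall_eq_zero, zero_add]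
        · refine setIntegral_congr_fun measurableSet_Ioo fun s hs => ?_
          simp only [htop hs, tube_zero, areaForm]
          ring
        · intro t ht
          simp [hside ht (left_mem_Icc.2 hδs) (by simp), hside ht (right_mem_Icc.2 hδs) (by simp)]
    _ = ∫ s in (s₀ - δ)..(s₀ + δ), areaForm w (deriv α s) * G (α s) := by
        rw [intervalIntegral.integral_of_le hδs, integral_Ioc_eq_integral_Ioo]

lemma intervalIntegral_boundary (h : IsTubeChart α v L s₀ δ) (hα : IsSimpleClosedCurve α L)
    (hGδ : tsupport G ⊆ tube α v '' Ioo (s₀ - δ) (s₀ + δ) ×ˢ Ioo (-δ) δ) (w : ℝ × ℝ) :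
    ∫ s in 0..L, areaForm w (deriv α s) * G (α s) =
      ∫ s in (s₀ - δ)..(s₀ + δ), areaForm w (deriv α s) * G (α s) := by
  have hδ := h.pos
  have hδL := h.two_mul_le
  have hperiodic : Function.Periodic (fun s => areaForm w (deriv α s) * G (α s)) L := fun s => by
    simp only [hα.periodic s, ← deriv_comp_add_const, hα.periodic.funext]
  refine intervalIntegral_eq_of_periodic_of_eq_zero hperiodic (by linarith) (by linarith)
    fun s hs => ?_
  rw [image_eq_zero_of_notMem_tsupport (f := G), mul_zero]
  intro hmem
  obtain ⟨q, hq, hqs⟩ := hGδ hmem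
  have hq₂ : q.2 = 0 := h.snd_eq_zero q
    (prod_mono Ioo_subset_Icc_self Ioo_subset_Icc_self hq) ⟨s, hqs.symm⟩
  have hqs₁ : α q.1 = α s := by rw [← hqs, tube, hq₂, zero_smul, add_zero]
  have := injOn_Ico_of_periodic hα.period_pos hα.periodic (a := 0) (by simpa using hα.injOn)
    (s₀ - δ) ⟨hq.1.1.le, by linarith [hq.1.2]⟩ ⟨by linarith [hs.1], hs.2⟩ hqs₁
  linarith [hs.1, hq.1.2]

end IsTubeChart

namespace GreenFormula

lemma zero : GreenFormula α L Ω 0 := fun w => by simp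

lemma add {F : ℝ × ℝ → ℝ} (hα : ContDiff ℝ 1 α) (hΩ : Bornology.IsBounded Ω)
    (hF : ContDiff ℝ 1 F) (hG : ContDiff ℝ 1 G) (hFΩ : GreenFormula α L Ω F)
    (hGΩ : GreenFormula α L Ω G) : GreenFormula α L Ω (F + G) := by
  intro w
  have integrableOn {H : ℝ × ℝ → ℝ} (hH : ContDiff ℝ 1 H) :
      IntegrableOn (fun p => fderiv ℝ H p w) Ω :=
    (((hH.continuous_fderiv one_ne_zero).clm_apply continuous_const).continuousOn
      |>.integrableOn_compact hΩ.isCompact_closure).mono_set subset_closure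
  have intervalIntegrable {H : ℝ × ℝ → ℝ} (hH : ContDiff ℝ 1 H) :
      IntervalIntegrable (fun s => areaForm w (deriv α s) * H (α s)) volume 0 L :=
    ((continuous_areaForm continuous_const hα.continuous_deriv_one).mul
      (hH.continuous.comp hα.continuous)).intervalIntegrable 0 L
  simp only [fderiv_add (hF.differentiable one_ne_zero _) (hG.differentiable one_ne_zero _),
    _root_.add_apply, Pi.add_apply, mul_add]
  rw [integral_add (integrableOn hF) (integrableOn hG),
    intervalIntegral.integral_add (intervalIntegrable hF) (intervalIntegrable hG), hFΩ w, hGΩ w]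

lemma of_tsupport_subset (hΩ : IsOpen Ω) (hfr : frontier Ω = range α) (hG : ContDiff ℝ 1 G)
    (hGc : HasCompactSupport G) (hGΩ : tsupport G ⊆ Ω) : GreenFormula α L Ω G := by
  intro w
  have hboundary (s : ℝ) : G (α s) = 0 := image_eq_zero_of_notMem_tsupport fun hs =>
    (hΩ.frontier_eq ▸ hfr ▸ mem_range_self s : α s ∈ closure Ω \ Ω).2 (hGΩ hs)
  have houtside (p : ℝ × ℝ) (hp : p ∉ Ω) : fderiv ℝ G p w = 0 :=
    image_eq_zero_of_notMem_tsupport (f := fun p => fderiv ℝ G p w) fun hmem =>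
      hp (hGΩ (tsupport_fderiv_apply_subset ℝ w hmem))
  rw [setIntegral_eq_integral_of_forall_compl_eq_zero houtside,
    integral_fderiv_eq_zero_of_hasCompactSupport hG hGc]
  simp [hboundary]

lemma of_tsupport_subset_compl (hfr : frontier Ω = range α) (hGΩ : tsupport G ⊆ (closure Ω)ᶜ) :
    GreenFormula α L Ω G := by
  intro w
  have hboundary (s : ℝ) : G (α s) = 0 := image_eq_zero_of_notMem_tsupport fun hs =>
    hGΩ hs (frontier_subset_closure (hfr ▸ mem_range_self s))
  have hinside (p : ℝ × ℝ) (hp : p ∈ Ω) : fderiv ℝ G p w = 0 :=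
    image_eq_zero_of_notMem_tsupport (f := fun p => fderiv ℝ G p w) fun hmem =>
      hGΩ (tsupport_fderiv_apply_subset ℝ w hmem) (subset_closure hp)
  rw [setIntegral_eq_zero_of_forall_eq_zero hinside]
  simp [hboundary]

end GreenFormula

lemma IsSimpleClosedCurve.exists_nhds_greenFormula (hα : IsSimpleClosedCurve α L)
    (hΩ : IsEnclosedBy Ω α) (s : ℝ) : ∃ V ∈ 𝓝 (α s), ∀ G : ℝ × ℝ → ℝ, ContDiff ℝ 1 G →
      tsupport G ⊆ V → GreenFormula α L Ω G := by
  obtain ⟨δ, h⟩ := hα.exists_isTubeChart (areaForm_quarterTurn_self_pos (hα.deriv_ne_zero s))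
  refine ⟨_, h.isOpen_image.mem_nhds h.mem_image, fun G hG hGδ w => ?_⟩
  rw [h.intervalIntegral_boundary hα hGδ, h.setIntegral_fderiv hα.contDiff hΩ.isOpen hΩ.frontier_eq
    (hΩ.left_mem s) (hα.mem_closure_compl_closure hΩ.isBounded hΩ.frontier_eq s) hG hGδ]

lemma IsSimpleClosedCurve.greenFormula_of_hasCompactSupport (hα : IsSimpleClosedCurve α L)
    (hΩ : IsEnclosedBy Ω α) (hG : ContDiff ℝ 1 G) (hGc : HasCompactSupport G) :
    GreenFormula α L Ω G := by
  refine hasCompactSupport_contDiff_induction (n := 1) .zero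
    (fun F G hF _ hG _ => .add hα.contDiff hΩ.isBounded hF hG) (fun p => ?_) hG hGc
  by_cases hp : p ∈ Ω
  · exact ⟨Ω, hΩ.isOpen.mem_nhds hp, fun G hG hGc hGΩ =>
      .of_tsupport_subset hΩ.isOpen hΩ.frontier_eq hG hGc hGΩ⟩
  by_cases hpcl : p ∈ closure Ω
  · have hpfr : p ∈ range α := hΩ.frontier_eq ▸ hΩ.isOpen.frontier_eq ▸ ⟨hpcl, hp⟩
    obtain ⟨s, rfl⟩ := hpfr
    obtain ⟨V, hV, hGreen⟩ := hα.exists_nhds_greenFormula hΩ s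
    exact ⟨V, hV, fun G hG _ => hGreen G hG⟩
  · exact ⟨(closure Ω)ᶜ, isClosed_closure.isOpen_compl.mem_nhds hpcl, fun G _ _ =>
      .of_tsupport_subset_compl hΩ.frontier_eq⟩

theorem IsSimpleClosedCurve.greenFormula (hα : IsSimpleClosedCurve α L) (hΩ : IsEnclosedBy Ω α)
    (hG : ContDiff ℝ 1 G) : GreenFormula α L Ω G := by
  intro w
  obtain ⟨r, hr, hΩr⟩ := hΩ.isBounded.closure.subset_ball_lt 0 0
  let χ : ContDiffBump (0 : ℝ × ℝ) := ⟨r, r + 1, hr, by linarith⟩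
  have hχ {p : ℝ × ℝ} (hp : p ∈ closure Ω) : (fun p => χ p * G p) =ᶠ[𝓝 p] G := by
    filter_upwards [Metric.isOpen_ball.mem_nhds (hΩr hp)] with p' hp'
    rw [χ.one_of_mem_closedBall (Metric.ball_subset_closedBall hp'), one_mul]
  calc ∫ p in Ω, fderiv ℝ G p w
      = ∫ p in Ω, fderiv ℝ (fun p => χ p * G p) p w :=
        setIntegral_congr_fun hΩ.isOpen.measurableSet fun p hp => by
          simp only [(hχ (subset_closure hp)).fderiv_eq]
    _ = ∫ s in 0..L, areaForm w (deriv α s) * (χ (α s) * G (α s)) :=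
        hα.greenFormula_of_hasCompactSupport hΩ (χ.contDiff.mul hG)
          χ.hasCompactSupport.mul_right w
    _ = ∫ s in 0..L, areaForm w (deriv α s) * G (α s) := by
        congr with s
        rw [(hχ (frontier_subset_closure (hΩ.frontier_eq ▸ mem_range_self s))).eq_of_nhds]

theorem IsSimpleClosedCurve.intervalIntegral_areaForm_deriv (hα : IsSimpleClosedCurve α L)
    (hΩ : IsEnclosedBy Ω α) :
    ∫ s in 0..L, areaForm (α s) (deriv α s) = 2 * volume.real Ω := by
  have hα₀ := hα.contDiff.continuous
  have hα' := hα.contDiff.continuous_deriv_one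
  have hfst := hα.greenFormula hΩ contDiff_fst (1, 0)
  have hsnd := hα.greenFormula hΩ contDiff_snd (0, 1)
  simp only [fderiv_fst, fderiv_snd, ContinuousLinearMap.coe_fst', ContinuousLinearMap.coe_snd',
    setIntegral_const, smul_eq_mul, mul_one] at hfst hsnd
  rw [two_mul]
  nth_rw 1 [hfst]
  rw [hsnd, ← intervalIntegral.integral_add (Continuous.intervalIntegrable (by fun_prop) 0 L)
    (Continuous.intervalIntegrable (by fun_prop) 0 L)]
  congr with s
  simp only [areaForm]
  ring

end Green

section LengthEstimate

/-- After summation the term `k` of the potential cancels against the Dirichlet energies. -/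
lemma intervalIntegral_le_of_sum_stability {ι : Type*} [Fintype ι] {g : ι → ℝ → ℝ}
    {k p : ℝ → ℝ} {c L : ℝ} (hg : ∀ i, ContDiff ℝ 1 (g i)) (hp : Continuous p)
    (hsum : ∀ s, ∑ i, g i s ^ 2 = 1) (hsum' : ∀ s, ∑ i, deriv (g i) s ^ 2 = k s)
    (hstab : ∑ i, ∫ s in 0..L, (k s + p s) * g i s ^ 2 ≤
      ∑ i, (c * (∫ s in 0..L, g i s ^ 2) + ∫ s in 0..L, deriv (g i) s ^ 2)) :
    ∫ s in 0..L, p s ≤ c * L := by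
  have hgc (i : ι) : Continuous (g i) := (hg i).continuous
  have hgc' (i : ι) : Continuous (deriv (g i)) := (hg i).continuous_deriv_one
  have hk : Continuous k := by
    rw [← funext hsum']
    fun_prop
  have intervalIntegrable {f : ℝ → ℝ} (hf : Continuous f) : IntervalIntegrable f volume 0 L :=
    hf.intervalIntegrable 0 L
  have hmass : ∑ i, ∫ s in 0..L, g i s ^ 2 = L := by
    rw [← intervalIntegral.integral_finsetSum fun i _ => intervalIntegrable (by fun_prop)]
    simp [hsum]
  have henergy : ∑ i, ∫ s in 0..L, deriv (g i) s ^ 2 = ∫ s in 0..L, k s := by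
    rw [← intervalIntegral.integral_finsetSum fun i _ => intervalIntegrable (by fun_prop)]
    simp only [hsum']
  have hpotential : ∑ i, ∫ s in 0..L, (k s + p s) * g i s ^ 2 =
      (∫ s in 0..L, k s) + ∫ s in 0..L, p s := by
    rw [← intervalIntegral.integral_finsetSum fun i _ =>
        intervalIntegrable (by fun_prop),
      ← intervalIntegral.integral_add (intervalIntegrable hk) (intervalIntegrable hp)]
    simp only [← Finset.mul_sum, hsum, mul_one]
  rw [hpotential, Finset.sum_add_distrib, ← Finset.mul_sum, hmass, henergy] at hstab
  linarith

lemma IsEnclosedBy.volume_real_pos {α : ℝ → ℝ × ℝ} {Ω : Set (ℝ × ℝ)} (hΩ : IsEnclosedBy Ω α) :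
    0 < volume.real Ω := by
  obtain ⟨t, ht⟩ := (hΩ.left_mem 0).exists
  exact ENNReal.toReal_pos (hΩ.isOpen.measure_pos volume ⟨_, ht⟩).ne'
    hΩ.isBounded.measure_lt_top.ne

lemma le_pi_div_two_mul_sqrt {a A l L : ℝ} (ha : 0 < a) (hA : 0 < A) (hl : 0 < l)
    (h : 2 * a * (2 * A) ≤ π ^ 2 / l ^ 2 * L) : l ≤ π / 2 * √(L / (a * A)) := by
  rw [← div_le_iff₀' (by positivity)]
  refine Real.le_sqrt_of_sq_le ?_
  rw [div_pow, div_pow, div_div_eq_mul_div, div_le_div_iff₀ (by positivity) (by positivity)]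
  rw [div_mul_eq_mul_div, le_div_iff₀ (by positivity)] at h
  linarith

lemma IsEnclosedBy.of_image_Ico {α : ℝ → ℝ × ℝ} {L : ℝ} {Ω : Set (ℝ × ℝ)} (hL : 0 < L)
    (hper : Function.Periodic α L) (hΩ : IsOpen Ω) (hΩbdd : Bornology.IsBounded Ω)
    (hbound : frontier Ω = α '' Ico 0 L)
    (hleft : ∀ s, ∃ ε > 0, ∀ t ∈ Ioo (0 : ℝ) ε, α s + t • quarterTurn (deriv α s) ∈ Ω) :
    IsEnclosedBy Ω α where
  isOpen := hΩ
  isBounded := hΩbdd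
  frontier_eq := by simpa [hbound] using image_Ico_of_periodic hL hper 0
  left_mem s :=
    let ⟨_, hε, hmem⟩ := hleft s
    mem_of_superset (Ioo_mem_nhdsGT hε) hmem

lemma deriv_fst_sq_add_deriv_snd_sq {T : ℝ → ℝ × ℝ} {k s : ℝ} (hT : DifferentiableAt ℝ T s)
    (hunit : (T s).1 ^ 2 + (T s).2 ^ 2 = 1) (hderiv : deriv T s = k • quarterTurn (T s)) :
    deriv (fun r => (T r).1) s ^ 2 + deriv (fun r => (T r).2) s ^ 2 = k ^ 2 := by
  have hfst : deriv (fun r => (T r).1) s = (deriv T s).1 :=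
    ((hasFDerivAt_fst (𝕜 := ℝ) (p := T s)).comp_hasDerivAt s hT.hasDerivAt).deriv
  have hsnd : deriv (fun r => (T r).2) s = (deriv T s).2 :=
    ((hasFDerivAt_snd (𝕜 := ℝ) (p := T s)).comp_hasDerivAt s hT.hasDerivAt).deriv
  simp only [hfst, hsnd, hderiv, quarterTurn, Prod.smul_fst, Prod.smul_snd, smul_eq_mul]
  linear_combination k ^ 2 * hunit

theorem main_length_estimate_general
    (α : ℝ → ℝ × ℝ) (κ : ℝ → ℝ) (L l a : ℝ) (Ω : Set (ℝ × ℝ))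
    (hL : 0 < L) (hl : 0 < l) (ha : 0 < a)
    (hα : ContDiff ℝ 2 α)
    (harc : ∀ s, (deriv α s).1 ^ 2 + (deriv α s).2 ^ 2 = 1)
    (hper : ∀ s, α (s + L) = α s)
    (hsimple : InjOn α (Ico 0 L))
    (hcurv : ∀ s, deriv (deriv α) s = κ s • (-(deriv α s).2, (deriv α s).1))
    (hΩopen : IsOpen Ω) (hΩbdd : Bornology.IsBounded Ω)
    (hbound : frontier Ω = α '' Ico 0 L)
    (hccw : ∀ s, ∃ ε > 0, ∀ t ∈ Ioo (0 : ℝ) ε,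
      α s + t • (-(deriv α s).2, (deriv α s).1) ∈ Ω)
    (g : Fin 2 → ℝ → ℝ)
    (hg₁ : g 0 = fun s => (deriv α s).1)
    (hg₂ : g 1 = fun s => (deriv α s).2)
    (hstab : ∑ i, ((π ^ 2 / l ^ 2) * (∫ s in (0 : ℝ)..L, g i s ^ 2)
          + (∫ s in (0 : ℝ)..L, (deriv (g i) s) ^ 2))
        ≥ ∑ i, ∫ s in (0 : ℝ)..L,
            (κ s ^ 2 + 2 * a * ((α s).1 * (deriv α s).2 - (α s).2 * (deriv α s).1))
              * g i s ^ 2) :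
    l ≤ (π / 2) * √(L / (a * (volume Ω).toReal)) := by
  have hα' : ContDiff ℝ 1 (deriv α) := hα.deriv'
  have hcurve : IsSimpleClosedCurve α L :=
    ⟨hL, hα.of_le one_le_two, fun s hs => by simpa [hs] using harc s, hper, hsimple⟩
  have hΩ : IsEnclosedBy Ω α := .of_image_Ico hL hper hΩopen hΩbdd hbound hccw
  have hg : ∀ i, ContDiff ℝ 1 (g i) :=
    Fin.forall_fin_two.2 ⟨hg₁ ▸ hα'.fst, hg₂ ▸ hα'.snd⟩
  have hsum (s : ℝ) : ∑ i, g i s ^ 2 = 1 := by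
    rw [Fin.sum_univ_two, hg₁, hg₂, harc]
  have hsum' (s : ℝ) : ∑ i, deriv (g i) s ^ 2 = κ s ^ 2 := by
    rw [Fin.sum_univ_two, hg₁, hg₂]
    exact deriv_fst_sq_add_deriv_snd_sq (hα'.differentiable one_ne_zero s) (harc s) (hcurv s)
  have hle : ∫ s in 0..L, 2 * a * areaForm (α s) (deriv α s) ≤ π ^ 2 / l ^ 2 * L :=
    intervalIntegral_le_of_sum_stability hg
      (continuous_const.mul (continuous_areaForm hα.continuous hα'.continuous)) hsum hsum' hstab
  rw [intervalIntegral.integral_const_mul, hcurve.intervalIntegral_areaForm_deriv hΩ] at hle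
  exact le_pi_div_two_mul_sqrt ha hΩ.volume_real_pos hl hle

end LengthEstimate

/-- Theorem 1 of the paper (main length estimate): if the two stability
inequalities hold for the test tangent components `g₁, g₂`, then
`l ≤ (π/2)√(L/(a·area Ω))`. -/
theorem main_length_estimate
    (α : ℝ → ℝ × ℝ) (κ : ℝ → ℝ) (L l a : ℝ) (Ω : Set (ℝ × ℝ))
    (hL : 0 < L) (hl : 0 < l) (ha : 0 < a)
    (hsmooth : ContDiff ℝ (⊤ : ℕ∞) α)
    (harc : ∀ s, (deriv α s).1 ^ 2 + (deriv α s).2 ^ 2 = 1)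
    (hper : ∀ s, α (s + L) = α s)
    (hsimple : Set.InjOn α (Set.Ico 0 L))
    (hcurv : ∀ s, deriv (deriv α) s = κ s • (-(deriv α s).2, (deriv α s).1))
    (hΩopen : IsOpen Ω) (hΩbdd : Bornology.IsBounded Ω)
    (hbound : frontier Ω = α '' Set.Ico 0 L)
    (hccw : ∀ s, ∃ ε > 0, ∀ t ∈ Set.Ioo (0 : ℝ) ε,
      α s + t • (-(deriv α s).2, (deriv α s).1) ∈ Ω)
    (g : Fin 2 → ℝ → ℝ)
    (hg₁ : g 0 = fun s => (deriv α s).1)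
    (hg₂ : g 1 = fun s => (deriv α s).2)
    (hstab : ∀ i : Fin 2,
      (π ^ 2 / l ^ 2) * (∫ s in (0 : ℝ)..L, g i s ^ 2)
          + (∫ s in (0 : ℝ)..L, (deriv (g i) s) ^ 2)
        ≥ ∫ s in (0 : ℝ)..L,
            (κ s ^ 2 + 2 * a * ((α s).1 * (deriv α s).2 - (α s).2 * (deriv α s).1))
              * g i s ^ 2) :
    l ≤ (π / 2) * Real.sqrt (L / (a * (volume Ω).toReal)) :=
  main_length_estimate_general α κ L l a Ω hL hl ha (contDiff_infty.1 hsmooth 2) harc hper hsimple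
    hcurv hΩopen hΩbdd hbound hccw g hg₁ hg₂ (Finset.sum_le_sum fun i _ => hstab i)
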